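/- The image of the standard polynomial S₃(x₁,x₂,x₃) = x₁x₂x₃ + x₂x₃x₁ + x₃x₁x₂ − x₁x₃x₂ − x₃x₂x₁ − x₂x₁x₃ on triples from M₃(ℂ) is all of M₃(ℂ). -/

import Mathlib

open Matrix

/-- The standard polynomial of degree three. -/
def standardThree {R : Type*} [Ring R] (a b c : R) : R :=
  a * b * c + b * c * a + c * a * b - a * c * b - c * b * a - b * a * c

theorem map_standardThree {R S F : Type*} [Ring R] [Ring S] [FunLike F R S] [RingHomClass F R S]
    (f : F) (a b c : R) :
    f (standardThree a b c) = standardThree (f a) (f b) (f c) := by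
  simp [standardThree]

/-- The image of the standard polynomial is invariant under conjugation. -/
theorem exists_standardThree_of_conj {R : Type*} [Ring R] {p q d : R} (hpq : p * q = 1)
    (hqp : q * p = 1) (h : ∃ a b c, standardThree a b c = q * d * p) :
    ∃ a b c, standardThree a b c = d := by
  obtain ⟨a, b, c, h⟩ := h
  let u : ConjAct Rˣ := ConjAct.toConjAct ⟨p, q, hpq, hqp⟩
  let f := MulSemiringAction.toRingHom (ConjAct Rˣ) R u
  have hf : f (q * d * p) = d := by
    change p * (q * d * p) * q = d
    rw [mul_assoc q, ← mul_assoc p, hpq, one_mul, mul_assoc, hpq, mul_one]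
  exact ⟨f a, f b, f c, by rw [← map_standardThree, h, hf]⟩

/-- Over an algebraically closed field, a matrix can be conjugated so that a given coordinate vector
becomes an eigenvector. -/
theorem exists_conj_col_eq_zero {K n : Type*} [Field K] [IsAlgClosed K] [Fintype n] [DecidableEq n]
    (D : Matrix n n K) (j : n) :
    ∃ P Q : Matrix n n K, P * Q = 1 ∧ Q * P = 1 ∧ ∀ i, i ≠ j → (Q * D * P) i j = 0 := by
  have : Nonempty n := ⟨j⟩
  obtain ⟨μ, hμ⟩ := Module.End.exists_eigenvalue (toLin' D)
  obtain ⟨v, hv⟩ := hμ.exists_hasEigenvector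
  have hj : (Pi.single j 1 : n → K) ≠ 0 := by simp
  obtain ⟨g, hg⟩ := MulAction.exists_smul_eq (SpecialLinearGroup n K)
    (Projectivization.mk K _ hj) (Projectivization.mk K v hv.2)
  rw [Projectivization.smul_mk, Projectivization.mk_eq_mk_iff'] at hg
  obtain ⟨a, ha⟩ := hg
  have hP : (g : Matrix n n K) *ᵥ Pi.single j 1 = a • v := ha.symm
  have hD : D *ᵥ v = μ • v := hv.apply_eq_smul
  obtain ⟨Q, hQ⟩ : ∃ Q : Matrix n n K, Q * g = 1 :=
    ⟨adjugate g, by rw [adjugate_mul, g.det_coe, one_smul]⟩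
  refine ⟨g, Q, mul_eq_one_comm.mp hQ, hQ, fun i hi => ?_⟩
  have h : (Q * D * (g : Matrix n n K)) *ᵥ Pi.single j 1 = μ • Pi.single j 1 := by
    rw [← mulVec_mulVec, hP, ← mulVec_mulVec, mulVec_smul, hD, smul_comm, ← hP, mulVec_smul,
      mulVec_mulVec, hQ, one_mulVec]
  simpa [hi] using congrFun h i

/-- Every upper triangular `3 × 3` matrix is a value of the standard polynomial. -/
theorem exists_standardThree_of_upper {K : Type*} [Field K] [CharZero K]
    {D : Matrix (Fin 3) (Fin 3) K} (h10 : D 1 0 = 0) (h20 : D 2 0 = 0) (h21 : D 2 1 = 0) :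
    ∃ A B C, standardThree A B C = D := by
  refine ⟨!![-1, 0, 0; 0, 0, 0; 0, 0, 1], !![0, 0, 1; 1, 0, 0; 0, 1, 0],
    !![-D 0 2, (2 * D 1 1 + D 0 0 - D 2 2) / 4, 0;
      -D 1 2 / 2, 0, (2 * D 1 1 - D 0 0 + D 2 2) / 4;
      (2 * D 1 1 - D 0 0 - D 2 2) / 6, -D 0 1 / 2, 0], ?_⟩
  ext i j
  fin_cases i <;> fin_cases j <;>
    simp [standardThree, h10, h20, h21] <;> ring

theorem exists_standardThree_eq {K : Type*} [Field K] [IsAlgClosed K] [CharZero K]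
    (D : Matrix (Fin 3) (Fin 3) K) : ∃ A B C, standardThree A B C = D := by
  obtain ⟨P, Q, hPQ, hQP, hT⟩ := exists_conj_col_eq_zero D 0
  apply exists_standardThree_of_conj hPQ hQP
  generalize Q * D * P = T at hT
  have h10 := hT 1 (by decide)
  have h20 := hT 2 (by decide)
  obtain ⟨P', Q', hPQ', hQP', hT'⟩ :=
    exists_conj_col_eq_zero !![T 1 1, T 1 2; T 2 1, T 2 2] 0
  have h21 := hT' 1 (by decide)
  have extend {X Y : Matrix (Fin 2) (Fin 2) K} (h : X * Y = 1) :
      !![1, 0, 0; 0, X 0 0, X 0 1; 0, X 1 0, X 1 1] *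
        !![1, 0, 0; 0, Y 0 0, Y 0 1; 0, Y 1 0, Y 1 1] = (1 : Matrix (Fin 3) (Fin 3) K) := by
    simp only [← Matrix.ext_iff, Fin.forall_fin_two, Matrix.mul_apply, Fin.sum_univ_two] at h
    ext i j
    fin_cases i <;> fin_cases j <;> simp [Matrix.mul_apply, Fin.sum_univ_three, h]
  apply exists_standardThree_of_conj (extend hPQ') (extend hQP')
  apply exists_standardThree_of_upper
  · simp [vecMul, dotProduct, Matrix.mul_apply, Fin.sum_univ_three, h10, h20]
  · simp [vecMul, dotProduct, Matrix.mul_apply, Fin.sum_univ_three, h10, h20]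
  · simpa [vecMul, dotProduct, Matrix.mul_apply, Fin.sum_univ_three] using h21

/-- the image of the standard polynomial `S₃` on triples from `M₃(ℂ)` is
all of `M₃(ℂ)`. -/
theorem image_S3_eq_full
    (S3 : Matrix (Fin 3) (Fin 3) ℂ → Matrix (Fin 3) (Fin 3) ℂ → Matrix (Fin 3) (Fin 3) ℂ →
      Matrix (Fin 3) (Fin 3) ℂ)
    (hS3 : ∀ A B C, S3 A B C =
      A * B * C + B * C * A + C * A * B - A * C * B - C * B * A - B * A * C) :
    ∀ D : Matrix (Fin 3) (Fin 3) ℂ, ∃ A B C, S3 A B C = D := by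
  intro D
  obtain ⟨A, B, C, h⟩ := exists_standardThree_eq D
  exact ⟨A, B, C, (hS3 A B C).trans h⟩
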